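/- Let x₀ ∈ ℝ and let f : ℝ → ℝ be specularly differentiable at every point of some neighborhood of x₀, continuous on that neighborhood, and suppose the function x ↦ f^S(x) is continuous at x₀. Then f is differentiable at x₀ and f'(x₀) = f^S(x₀). -/

import Mathlib

open Filter Topology Set

/-- The combination function `A(α,β)` from the paper: the slope of the specular
tangent determined by one-sided slopes `α` (right) and `β` (left). -/
noncomputable def specA (α β : ℝ) : ℝ :=
  if α + β = 0 then 0
  else (α * β - 1 + Real.sqrt ((α ^ 2 + 1) * (β ^ 2 + 1))) / (α + β)

/-- `HasSpecData f x₀ L α β` means: the left and right limits of `f` at `x₀` both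
exist and are equal to `L`, the right specular derivative of `f` at `x₀` is `α`,
and the left specular derivative of `f` at `x₀` is `β`. -/
def HasSpecData (f : ℝ → ℝ) (x₀ L α β : ℝ) : Prop :=
  Tendsto f (𝓝[<] x₀) (𝓝 L) ∧ Tendsto f (𝓝[>] x₀) (𝓝 L) ∧
    Tendsto (fun x => (f x - L) / (x - x₀)) (𝓝[>] x₀) (𝓝 α) ∧
    Tendsto (fun x => (f x - L) / (x - x₀)) (𝓝[<] x₀) (𝓝 β)

/-- `f` is specularly differentiable at `x₀`. -/
def SpecDifferentiableAt (f : ℝ → ℝ) (x₀ : ℝ) : Prop :=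
  ∃ L α β, HasSpecData f x₀ L α β

/-- `f` is specularly differentiable at `x₀` with specular derivative `d`. -/
def HasSpecDerivAt (f : ℝ → ℝ) (x₀ d : ℝ) : Prop :=
  ∃ L α β, HasSpecData f x₀ L α β ∧ d = specA α β

/-!
`A(α, β)` is the slope of the sum of the unit vectors along `(1, α)` and `(1, β)`, hence a weighted
mean of `α` and `β`; so it is at least `m` as soon as both one-sided slopes are.

If the slope of `f` over `[a, b]` exceeds `m`, then `h x = f x - m * x` satisfies `h a < h b`. A
function has only countably many local minimum values, so some level `y` strictly between `h a`
and `h b` is not one of them. At the last point `c` of `[a, b]` where `h ≤ y`, the function `h`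
is larger than `h c` to the right of `c`, and it takes values smaller than `h c` arbitrarily
close to the left of `c`, since `c` is not a local minimum. Hence both one-sided slopes of `f`
at `c` are at least `m`, and so is the specular derivative there. By this mean value inequality,
the difference quotients of `f` at `x₀` inherit the limit of the specular derivative.
-/

section Crossing

theorem countable_image_setOf_isLocalMin {X Y : Type*} [TopologicalSpace X]
    [SecondCountableTopology X] [PartialOrder Y] (f : X → Y) :
    (f '' {x | IsLocalMin f x}).Countable := by
  have hbasis := TopologicalSpace.isBasis_countableBasis X
  suffices hsub : f '' {x | IsLocalMin f x} ⊆
      ⋃ U ∈ TopologicalSpace.countableBasis X, {y | IsLeast (f '' U) y} from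
    ((TopologicalSpace.countable_countableBasis X).biUnion fun _ _ =>
      Set.Subsingleton.countable fun _ hy _ hz => hy.unique hz).mono hsub
  rintro _ ⟨x, hx, rfl⟩
  obtain ⟨U, hU, hxU, hmin⟩ := hbasis.mem_nhds_iff.1 hx
  exact mem_biUnion hU ⟨mem_image_of_mem f hxU, forall_mem_image.2 hmin⟩

variable {X Y : Type*} [TopologicalSpace X] [LinearOrder Y]

theorem frequently_nhdsLT_lt_of_not_isLocalMin [LinearOrder X] {f : X → Y} {c : X}
    (hmin : ¬IsLocalMin f c) (hright : ∀ᶠ x in 𝓝[>] c, f c < f x) :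
    ∃ᶠ x in 𝓝[<] c, f x < f c := by
  contrapose! hmin
  have hne : ∀ᶠ x in 𝓝[≠] c, f c ≤ f x := by
    rw [← Iio_union_Ioi, nhdsWithin_union]
    exact eventually_sup.2 ⟨hmin, hright.mono fun _ => le_of_lt⟩
  rw [IsLocalMin, IsMinFilter, ← nhdsNE_sup_pure]
  exact eventually_sup.2 ⟨hne, eventually_pure.2 le_rfl⟩

variable [ConditionallyCompleteLinearOrder X] [OrderTopology X] [DenselyOrdered X] {a b : X}

theorem exists_eq_forall_mem_Ioc_lt [TopologicalSpace Y] [OrderClosedTopology Y]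
    {f : X → Y} {y : Y} (hab : a ≤ b) (hf : ContinuousOn f (Icc a b)) (hay : f a < y)
    (hyb : y < f b) : ∃ c ∈ Ioo a b, f c = y ∧ ∀ x ∈ Ioc c b, y < f x := by
  have hcompact : IsCompact (Icc a b ∩ f ⁻¹' Iic y) :=
    isCompact_Icc.of_isClosed_subset
      (hf.preimage_isClosed_of_isClosed isClosed_Icc isClosed_Iic) inter_subset_left
  obtain ⟨c, ⟨hc, hcy : f c ≤ y⟩, hlast⟩ :=
    hcompact.exists_isGreatest ⟨a, left_mem_Icc.2 hab, hay.le⟩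
  have hcb : c < b := hc.2.lt_of_ne fun h => (h ▸ hcy).not_gt hyb
  have hright : ∀ x ∈ Ioc c b, y < f x := fun x hx => not_le.1 fun hxy =>
    hx.1.not_ge (hlast ⟨⟨hc.1.trans hx.1.le, hx.2⟩, hxy⟩)
  have hceq : f c = y := by
    have : (𝓝[Ioc c b] c).NeBot := left_nhdsWithin_Ioc_neBot hcb
    exact hcy.antisymm <| ge_of_tendsto
      ((hf c hc).mono fun x hx => ⟨hc.1.trans hx.1.le, hx.2⟩)
      (eventually_mem_nhdsWithin.mono fun x hx => (hright x hx).le)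
  have hac : a < c := hc.1.lt_of_ne fun h => (h ▸ hay).ne hceq
  exact ⟨c, ⟨hac, hcb⟩, hceq, hright⟩

theorem exists_frequently_lt_and_eventually_gt [SecondCountableTopology X]
    {f : X → ℝ} (hab : a ≤ b) (hf : ContinuousOn f (Icc a b)) (hlt : f a < f b) :
    ∃ c ∈ Ioo a b, (∃ᶠ x in 𝓝[<] c, f x < f c) ∧ ∀ᶠ x in 𝓝[>] c, f c < f x := by
  obtain ⟨y, hy, hy_min⟩ : (Ioo (f a) (f b) \ f '' {x | IsLocalMin f x}).Nonempty := by
    rw [sdiff_nonempty]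
    exact fun hsub => (Cardinal.Real.Ioo_countable_iff.1
      ((countable_image_setOf_isLocalMin f).mono hsub)).not_gt hlt
  obtain ⟨c, hc, rfl, hright⟩ := exists_eq_forall_mem_Ioc_lt hab hf hy.1 hy.2
  have hgt : ∀ᶠ x in 𝓝[>] c, f c < f x := mem_of_superset (Ioc_mem_nhdsGT hc.2) hright
  exact ⟨c, hc,
    frequently_nhdsLT_lt_of_not_isLocalMin (fun h => hy_min (mem_image_of_mem f h)) hgt, hgt⟩

end Crossing

theorem specA_eq_weighted_mean (α β : ℝ) :
    specA α β = (α * √(β ^ 2 + 1) + β * √(α ^ 2 + 1)) / (√(α ^ 2 + 1) + √(β ^ 2 + 1)) := by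
  have hα : √(α ^ 2 + 1) ^ 2 = α ^ 2 + 1 := Real.sq_sqrt (by positivity)
  have hβ : √(β ^ 2 + 1) ^ 2 = β ^ 2 + 1 := Real.sq_sqrt (by positivity)
  unfold specA
  split_ifs with h
  · obtain rfl : β = -α := by linarith
    simp
  · rw [Real.sqrt_mul (by positivity), div_eq_div_iff h (by positivity)]
    linear_combination √(β ^ 2 + 1) * hα + √(α ^ 2 + 1) * hβ

theorem specA_neg (α β : ℝ) : specA (-α) (-β) = -specA α β := by
  simp only [specA_eq_weighted_mean, neg_sq]
  ring

theorem le_specA {m α β : ℝ} (hα : m ≤ α) (hβ : m ≤ β) : m ≤ specA α β := by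
  rw [specA_eq_weighted_mean, le_div_iff₀ (by positivity)]
  calc m * (√(α ^ 2 + 1) + √(β ^ 2 + 1))
      = m * √(β ^ 2 + 1) + m * √(α ^ 2 + 1) := by ring
    _ ≤ α * √(β ^ 2 + 1) + β * √(α ^ 2 + 1) := by gcongr

namespace HasSpecDerivAt

variable {f : ℝ → ℝ} {c d m : ℝ}

protected theorem neg (h : HasSpecDerivAt f c d) : HasSpecDerivAt (-f) c (-d) := by
  obtain ⟨L, α, β, ⟨hleft, hright, hα, hβ⟩, rfl⟩ := h
  have hquot (x : ℝ) : -((f x - L) / (x - c)) = ((-f) x - -L) / (x - c) := by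
    rw [Pi.neg_apply]
    ring
  exact ⟨-L, -α, -β, ⟨hleft.neg, hright.neg, hα.neg.congr hquot, hβ.neg.congr hquot⟩,
    (specA_neg α β).symm⟩

theorem exists_tendsto_slope (h : HasSpecDerivAt f c d) (hf : ContinuousAt f c) :
    ∃ α β, Tendsto (slope f c) (𝓝[>] c) (𝓝 α) ∧ Tendsto (slope f c) (𝓝[<] c) (𝓝 β) ∧
      d = specA α β := by
  obtain ⟨L, α, β, ⟨-, hright, hα, hβ⟩, hd⟩ := h
  obtain rfl : L = f c := tendsto_nhds_unique hright (hf.tendsto.mono_left nhdsWithin_le_nhds)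
  simp only [← slope_def_field] at hα hβ
  exact ⟨α, β, hα, hβ, hd⟩

theorem le_of_frequently_le_slope (h : HasSpecDerivAt f c d) (hf : ContinuousAt f c)
    (hleft : ∃ᶠ x in 𝓝[<] c, m ≤ slope f c x) (hright : ∃ᶠ x in 𝓝[>] c, m ≤ slope f c x) :
    m ≤ d := by
  obtain ⟨α, β, hα, hβ, rfl⟩ := h.exists_tendsto_slope hf
  exact le_specA (ge_of_tendsto_of_frequently hα hright) (ge_of_tendsto_of_frequently hβ hleft)

end HasSpecDerivAt

section MeanValue

variable {f g : ℝ → ℝ} {a b m M : ℝ}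

theorem exists_le_specDeriv_of_lt_slope (hab : a < b) (hf : ContinuousOn f (Icc a b))
    (hspec : ∀ x ∈ Ioo a b, HasSpecDerivAt f x (g x)) (hm : m < slope f a b) :
    ∃ c ∈ Ioo a b, m ≤ g c := by
  have hlt : f a - m * a < f b - m * b := by
    rw [slope_def_field, lt_div_iff₀ (sub_pos.2 hab)] at hm
    linarith
  have hcont : ContinuousOn (fun x => f x - m * x) (Icc a b) := by fun_prop
  obtain ⟨c, hc, hleft, hright⟩ := exists_frequently_lt_and_eventually_gt hab.le hcont hlt
  refine ⟨c, hc, (hspec c hc).le_of_frequently_le_slope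
    (hf.continuousAt (Icc_mem_nhds hc.1 hc.2)) ?_ ?_⟩
  · refine (hleft.and_eventually self_mem_nhdsWithin).mono fun x ⟨hx, (hxc : x < c)⟩ => ?_
    rw [slope_def_field, le_div_iff_of_neg (sub_neg.2 hxc)]
    linarith [hx]
  · refine (hright.and self_mem_nhdsWithin).frequently.mono fun x ⟨hx, (hxc : c < x)⟩ => ?_
    rw [slope_def_field, le_div_iff₀ (sub_pos.2 hxc)]
    linarith [hx]

theorem slope_le_of_specDeriv_le (hab : a < b) (hf : ContinuousOn f (Icc a b))
    (hspec : ∀ x ∈ Ioo a b, HasSpecDerivAt f x (g x)) (hg : ∀ x ∈ Ioo a b, g x ≤ M) :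
    slope f a b ≤ M := by
  by_contra! hM
  obtain ⟨m, hMm, hm⟩ := exists_between hM
  obtain ⟨c, hc, hmc⟩ := exists_le_specDeriv_of_lt_slope hab hf hspec hm
  exact (hMm.trans_le hmc).not_ge (hg c hc)

theorem le_slope_of_le_specDeriv (hab : a < b) (hf : ContinuousOn f (Icc a b))
    (hspec : ∀ x ∈ Ioo a b, HasSpecDerivAt f x (g x)) (hg : ∀ x ∈ Ioo a b, m ≤ g x) :
    m ≤ slope f a b := by
  have hneg : slope (-f) a b ≤ -m := slope_le_of_specDeriv_le hab hf.neg
    (fun x hx => (hspec x hx).neg) fun x hx => neg_le_neg (hg x hx)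
  rwa [slope_neg_fun, Pi.neg_apply, Pi.neg_apply, neg_le_neg_iff] at hneg

theorem slope_mem_Icc_of_specDeriv_mem_Icc (hab : a ≠ b) (hf : ContinuousOn f (uIcc a b))
    (hspec : ∀ x ∈ uIoo a b, HasSpecDerivAt f x (g x)) (hg : ∀ x ∈ uIoo a b, g x ∈ Icc m M) :
    slope f a b ∈ Icc m M := by
  wlog hlt : a < b generalizing a b
  · rw [slope_comm]
    rw [uIcc_comm] at hf
    rw [uIoo_comm] at hspec hg
    exact this hab.symm hf hspec hg (hab.lt_or_gt.resolve_left hlt)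
  rw [uIcc_of_lt hlt] at hf
  rw [uIoo_of_lt hlt] at hspec hg
  exact ⟨le_slope_of_le_specDeriv hlt hf hspec fun x hx => (hg x hx).1,
    slope_le_of_specDeriv_le hlt hf hspec fun x hx => (hg x hx).2⟩

end MeanValue

theorem deriv_eq_specular_of_continuousAt_general {f g : ℝ → ℝ} {x₀ d : ℝ}
    (hspec : ∀ᶠ x in 𝓝[≠] x₀, HasSpecDerivAt f x (g x))
    (hf : ∀ᶠ x in 𝓝 x₀, ContinuousAt f x) (hg : Tendsto g (𝓝[≠] x₀) (𝓝 d)) :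
    HasDerivAt f d x₀ := by
  rw [hasDerivAt_iff_tendsto_slope, Metric.nhds_basis_closedBall.tendsto_right_iff]
  intro ε hε
  rw [Real.closedBall_eq_Icc]
  have hg_near : ∀ᶠ x in 𝓝[≠] x₀, g x ∈ Icc (d - ε) (d + ε) :=
    hg (Icc_mem_nhds (by linarith) (by linarith))
  have hnear := hf.and (eventually_nhdsWithin_iff.1 (hspec.and hg_near))
  have hsegment := (tendsto_const_nhds.uIcc tendsto_id).eventually hnear.smallSets
  rw [eventually_nhdsWithin_iff]
  filter_upwards [hsegment] with x hx hne
  have hx_ne : ∀ y ∈ uIoo x₀ x, y ≠ x₀ := fun y hy h => left_notMem_uIoo (h ▸ hy)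
  have hx_open (y : ℝ) (hy : y ∈ uIoo x₀ x) := (hx y (uIoo_subset_uIcc_self hy)).2 (hx_ne y hy)
  exact slope_mem_Icc_of_specDeriv_mem_Icc (Ne.symm hne)
    (fun y hy => (hx y hy).1.continuousWithinAt) (fun y hy => (hx_open y hy).1)
    fun y hy => (hx_open y hy).2

theorem deriv_eq_specular_of_continuousAt (f g : ℝ → ℝ) (x₀ : ℝ) (s : Set ℝ)
    (hs : s ∈ 𝓝 x₀)
    (hspec : ∀ x ∈ s, HasSpecDerivAt f x (g x))
    (hf : ∀ x ∈ s, ContinuousAt f x)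
    (hg : ContinuousAt g x₀) :
    HasDerivAt f (g x₀) x₀ := by
  exact deriv_eq_specular_of_continuousAt_general (nhdsWithin_le_nhds (mem_of_superset hs hspec))
    (mem_of_superset hs hf) (hg.tendsto.mono_left nhdsWithin_le_nhds)
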